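/- For every θ ∈ ℝ, at least one of the following holds: for all odd k ≥ 1 the word t_k^θ = v_θ(−F_k + 1) v_θ(−F_k + 2) ... v_θ(0) is a cyclic rotation of s_k, or for all even k ≥ 0 the word t_k^θ is a cyclic rotation of s_k. -/

import Mathlib

/-- The Fibonacci substitution `S` on the alphabet `{0,1}` (encoded as `Bool`,
with `false` for `0` and `true` for `1`): `S(0) = 1`, `S(1) = 10`. -/
def fibS : Bool → List Bool
  | false => [true]
  | true => [true, false]

/-- The Fibonacci words `s_k = S^k(1)`; the word `s_k` has length `F_k = Nat.fib (k + 2)`. -/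
def fibWord : ℕ → List Bool
  | 0 => [true]
  | k + 1 => (fibWord k).flatMap fibS

/-- `ω = (√5 - 1)/2`, the inverse of the golden mean. -/
noncomputable def goldenOmega : ℝ := (Real.sqrt 5 - 1) / 2

/-- The Fibonacci potential sequence: `v_θ(n) = 1` if the fractional part of `nω + θ`
lies in `[1 - ω, 1)`, and `0` otherwise (letters encoded as `Bool`). -/
noncomputable def vTheta (θ : ℝ) (n : ℤ) : Bool :=
  if Int.fract ((n : ℝ) * goldenOmega + θ) ∈ Set.Ico (1 - goldenOmega) 1 then true else false

/-- The word `t_k^θ = v_θ(-F_k + 1) v_θ(-F_k + 2) ... v_θ(0)`. -/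
noncomputable def tTheta (θ : ℝ) (k : ℕ) : List Bool :=
  (List.range (Nat.fib (k + 2))).map fun i => vTheta θ (-(Nat.fib (k + 2) : ℤ) + 1 + (i : ℤ))

/-!
Put `F = F_k` and `p = F_{k-1}`, so that `F ω = p - (-ω)^(k+2)`. This is so close to an integer
that the floors `⌊i ω + y⌋`, `i < F`, agree with `⌊(c + i p) / F⌋` for some integer `c`.
If moreover `⌊F ω + y⌋ = ⌊y⌋ + p`, the increments of `i ↦ ⌊i ω + y⌋` spell a conjugate of the
Christoffel word of slope `p / F`. Conjugates for different `c` are rotations of one another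
because `p` and `F` are coprime.

The sequence `v_0(1) v_0(2) ⋯` is fixed by `S`: the image of its `n`-th letter begins at position
`n + ⌊n ω⌋ = ⌊n (1 + ω)⌋`, and `ω (1 + ω) = 1`. Hence `s_k` is its prefix of length `F`, to which
the above applies. For `t_k^θ` the condition on floors reads
`⌊θ + ω + (-ω)^(k+2)⌋ = ⌊θ + ω⌋`. It holds for all odd `k` if the fractional part of `θ + ω` is at
least `ω ^ 3`, and for all even `k` if it is less, because `ω ^ 2 + ω ^ 3 = ω < 1`.
-/

section Floor

variable {R : Type*} [CommRing R] [LinearOrder R] [IsStrictOrderedRing R] [FloorRing R]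

lemma floor_add_eq_floor_iff {x d : R} : ⌊x + d⌋ = ⌊x⌋ ↔ Int.fract x + d ∈ Set.Ico 0 1 := by
  rw [Int.floor_eq_iff, Set.mem_Ico, Int.fract]
  constructor <;> rintro ⟨hlow, hhigh⟩ <;> constructor <;> linarith

lemma floor_add_eq_floor_add_one_iff {x d : R} (hd : d ≤ 1) :
    ⌊x + d⌋ = ⌊x⌋ + 1 ↔ Int.fract x ∈ Set.Ico (1 - d) 1 := by
  have hfract := Int.fract_lt_one x
  rw [← sub_eq_iff_eq_add, ← Int.floor_sub_one, add_sub_assoc, floor_add_eq_floor_iff]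
  constructor <;> rintro ⟨hlow, -⟩ <;> constructor <;> linarith

variable {p : ℤ} {q : ℕ} {w : R}

lemma mul_floor_sub_mul_le (y : R) (hw : q * |q * w - p| < 1) {i j : ℕ} (hi : i ≤ q)
    (hj : j ≤ q) : q * ⌊i * w + y⌋ - i * p ≤ q * ⌊j * w + y⌋ - j * p + q := by
  have hdev : ((i : R) - j) * (q * w - p) < 1 := by
    have hi' : (i : R) ≤ q := mod_cast hi
    have hj' : (j : R) ≤ q := mod_cast hj
    have hij : |(i : R) - j| ≤ q :=
      abs_sub_le_iff.2
        ⟨by linarith [j.cast_nonneg (α := R)], by linarith [i.cast_nonneg (α := R)]⟩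
    calc ((i : R) - j) * (q * w - p)
        ≤ |(i : R) - j| * |q * w - p| := (le_abs_self _).trans_eq (abs_mul _ _)
      _ ≤ q * |q * w - p| := by gcongr
      _ < 1 := hw
  have hfloor : (q : R) * (⌊i * w + y⌋ - ⌊j * w + y⌋) ≤ q * ((i - j) * w + 1) := by
    gcongr
    linarith [Int.floor_le (i * w + y), Int.lt_floor_add_one (j * w + y)]
  have hreal : (q : R) * ⌊i * w + y⌋ - i * p < q * ⌊j * w + y⌋ - j * p + q + 1 := by
    linarith
  exact Int.lt_add_one_iff.1 (mod_cast hreal)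

/- Equality in `mul_floor_sub_mul_le` would force `i * p ≡ j * p` modulo `q`. -/
lemma mul_floor_sub_mul_lt (y : R) (hpq : IsCoprime p q) (hw : q * |q * w - p| < 1)
    {i j : ℕ} (hi : i < q) (hj : j < q) :
    q * ⌊i * w + y⌋ - i * p < q * ⌊j * w + y⌋ - j * p + q := by
  refine (mul_floor_sub_mul_le y hw hi.le hj.le).lt_of_ne fun heq => ?_
  have hdvd : (q : ℤ) ∣ (i - j) * p :=
    ⟨⌊i * w + y⌋ - ⌊j * w + y⌋ - 1, by linear_combination -heq⟩
  have hij : (i : ℤ) - j = 0 :=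
    Int.eq_zero_of_abs_lt_dvd (hpq.symm.dvd_of_dvd_mul_right hdvd) (by rw [abs_lt]; omega)
  obtain rfl : i = j := by omega
  omega

lemma exists_forall_floor_eq_ediv (y : R) (hpq : IsCoprime p q) (hq : 0 < q)
    (hw : q * |q * w - p| < 1) : ∃ c : ℤ, ∀ i < q, ⌊i * w + y⌋ = (c + i * p) / q := by
  obtain ⟨m, hm, hmax⟩ := (Finset.range q).exists_max_image
    (fun i : ℕ => q * ⌊i * w + y⌋ - i * p) ⟨0, Finset.mem_range.2 hq⟩
  refine ⟨q * ⌊m * w + y⌋ - m * p, fun i hi => Eq.symm ?_⟩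
  have hlow := hmax i (Finset.mem_range.2 hi)
  have hhigh := mul_floor_sub_mul_lt y hpq hw (Finset.mem_range.1 hm) hi
  rw [Int.ediv_eq_iff_of_pos (mod_cast hq)]
  constructor <;> linarith

lemma exists_forall_le_floor_eq_ediv {y : R} (hpq : IsCoprime p q) (hq : 0 < q)
    (hw : q * |q * w - p| < 1) (hy : ⌊q * w + y⌋ = ⌊y⌋ + p) :
    ∃ c : ℤ, ∀ i ≤ q, ⌊i * w + y⌋ = (c + i * p) / q := by
  obtain ⟨c, hc⟩ := exists_forall_floor_eq_ediv y hpq hq hw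
  refine ⟨c, fun i hi => ?_⟩
  rcases hi.lt_or_eq with hlt | rfl
  · exact hc i hlt
  · have hzero : ⌊y⌋ = c / i := by simpa using hc 0 hq
    rw [hy, hzero, Int.add_mul_ediv_left _ _ (mod_cast hq.ne')]

end Floor

section ChristoffelWord

/-- A conjugate of the Christoffel word of slope `p / q`: the `i`-th letter records whether
`⌊x / q⌋` increases by `1` from `x = c + i * p` to `x = c + (i + 1) * p`. The starting point `c`
selects the conjugate. -/
def christoffelWord (p : ℤ) (q : ℕ) (c : ℤ) : List Bool :=
  (List.range q).map fun i : ℕ => decide ((c + (i + 1) * p) / q = (c + i * p) / q + 1)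

lemma ediv_eq_ediv_add_one_congr {q x y x' y' : ℤ} (hq : q ≠ 0) (hx : x ≡ x' [ZMOD q])
    (hxy : x - x' = y - y') : y / q = x / q + 1 ↔ y' / q = x' / q + 1 := by
  obtain ⟨m, hm⟩ := hx.symm.dvd
  obtain rfl : x = x' + q * m := by linarith
  obtain rfl : y = y' + q * m := by linarith
  rw [Int.add_mul_ediv_left _ _ hq, Int.add_mul_ediv_left _ _ hq]
  omega

lemma rotate_christoffelWord (p : ℤ) (q : ℕ) {c c' : ℤ} {j : ℕ} (h : c + j * p ≡ c' [ZMOD q]) :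
    (christoffelWord p q c).rotate j = christoffelWord p q c' := by
  refine List.ext_getElem (by simp [christoffelWord]) fun i _ hi => ?_
  have hq : (q : ℤ) ≠ 0 := by
    have : i < q := by simpa [christoffelWord] using hi
    omega
  have hmod : (((i + j) % q : ℕ) : ℤ) ≡ i + j [ZMOD q] := by
    simpa using Int.mod_modEq ((i : ℤ) + j) q
  simp only [christoffelWord, List.getElem_rotate, List.getElem_map, List.getElem_range,
    List.length_map, List.length_range, decide_eq_decide]
  refine ediv_eq_ediv_add_one_congr hq ?_ (by ring)
  calc c + ((i + j) % q : ℕ) * p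
      ≡ c + (i + j) * p [ZMOD q] := (hmod.mul_right p).add_left c
    _ = c + j * p + i * p := by ring
    _ ≡ c' + i * p [ZMOD q] := h.add_right _

lemma christoffelWord_isRotated {p : ℤ} {q : ℕ} (hpq : IsCoprime p q) (hq : 0 < q) (c c' : ℤ) :
    christoffelWord p q c ~r christoffelWord p q c' := by
  obtain ⟨a, b, hab⟩ := hpq
  obtain ⟨j, hj⟩ := Int.eq_ofNat_of_zero_le
    (Int.emod_nonneg ((c' - c) * a) (mod_cast hq.ne' : (q : ℤ) ≠ 0))
  refine ⟨j, rotate_christoffelWord p q ?_⟩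
  calc c + j * p
      ≡ c + (c' - c) * a * p [ZMOD q] := ((hj ▸ Int.mod_modEq _ _).mul_right p).add_left c
    _ ≡ c' [ZMOD q] := Int.modEq_iff_dvd.2 ⟨(c' - c) * b, by linear_combination (c - c') * hab⟩

end ChristoffelWord

section GoldenOmega

lemma goldenOmega_eq_neg_goldenConj : goldenOmega = -Real.goldenConj := by
  unfold goldenOmega Real.goldenConj
  ring

lemma goldenOmega_pos : 0 < goldenOmega := by
  linarith [Real.goldenConj_neg, goldenOmega_eq_neg_goldenConj]

lemma goldenOmega_lt_one : goldenOmega < 1 := by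
  linarith [Real.neg_one_lt_goldenConj, goldenOmega_eq_neg_goldenConj]

lemma floor_goldenOmega : ⌊goldenOmega⌋ = 0 :=
  Int.floor_eq_zero_iff.2 ⟨goldenOmega_pos.le, goldenOmega_lt_one⟩

lemma goldenOmega_sq : goldenOmega ^ 2 = 1 - goldenOmega := by
  rw [goldenOmega_eq_neg_goldenConj, neg_sq, Real.goldenConj_sq]
  ring

lemma irrational_goldenOmega : Irrational goldenOmega :=
  goldenOmega_eq_neg_goldenConj ▸ Real.goldenConj_irrational.neg

lemma goldenOmega_pow_le_pow {m n : ℕ} (h : m ≤ n) : goldenOmega ^ n ≤ goldenOmega ^ m :=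
  pow_le_pow_of_le_one goldenOmega_pos.le goldenOmega_lt_one.le h

lemma fib_succ_mul_goldenOmega (n : ℕ) :
    Nat.fib (n + 1) * goldenOmega = Nat.fib n - (-goldenOmega) ^ (n + 1) := by
  rw [goldenOmega_eq_neg_goldenConj, neg_neg]
  linear_combination -Real.goldenConj_mul_fib_succ_add_fib n

lemma fib_succ_mul_goldenOmega_pow_le_one (n : ℕ) :
    Nat.fib (n + 1) * goldenOmega ^ n ≤ 1 := by
  have hfib : (Nat.fib (n + 1) : ℝ) ≤ Real.goldenRatio ^ n := by
    have hnonneg : 0 ≤ goldenOmega * Nat.fib n := mul_nonneg goldenOmega_pos.le (Nat.cast_nonneg _)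
    rw [goldenOmega_eq_neg_goldenConj] at hnonneg
    linarith [Real.fib_succ_sub_goldenConj_mul_fib n]
  calc Nat.fib (n + 1) * goldenOmega ^ n
      ≤ Real.goldenRatio ^ n * goldenOmega ^ n := by
        gcongr
        exact pow_nonneg goldenOmega_pos.le n
    _ = 1 := by
      rw [← mul_pow, goldenOmega_eq_neg_goldenConj, mul_neg, Real.goldenRatio_mul_goldenConj,
        neg_neg, one_pow]

lemma fib_succ_mul_abs_sub_lt_one (n : ℕ) :
    Nat.fib (n + 1) * |Nat.fib (n + 1) * goldenOmega - Nat.fib n| < 1 := by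
  have hω := goldenOmega_pos
  calc Nat.fib (n + 1) * |Nat.fib (n + 1) * goldenOmega - Nat.fib n|
      = Nat.fib (n + 1) * goldenOmega ^ n * goldenOmega := by
        rw [fib_succ_mul_goldenOmega, sub_sub_cancel_left, abs_neg, abs_pow, abs_neg,
          abs_of_pos hω, pow_succ, mul_assoc]
    _ ≤ 1 * goldenOmega := by gcongr; exact fib_succ_mul_goldenOmega_pow_le_one n
    _ < 1 := by linarith [goldenOmega_lt_one]

lemma neg_goldenOmega_pow_mem_Ioc (n : ℕ) : (-goldenOmega) ^ n ∈ Set.Ioc (-1) 1 := by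
  have hω := goldenOmega_pos
  have hpos := pow_pos hω n
  rcases n.even_or_odd with hn | hn
  · rw [hn.neg_pow]
    exact ⟨by linarith, pow_le_one₀ hω.le goldenOmega_lt_one.le⟩
  · rw [hn.neg_pow]
    have hlt := pow_lt_one₀ hω.le goldenOmega_lt_one hn.pos.ne'
    exact ⟨by linarith, by linarith⟩

lemma floor_fib_add_one_mul_goldenOmega (k : ℕ) :
    ⌊(Nat.fib (k + 2) + 1) * goldenOmega⌋ = Nat.fib (k + 1) := by
  have hω_sq := goldenOmega_sq
  have hω_sq_pos := pow_pos goldenOmega_pos 2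
  have hω_sq_lt : goldenOmega ^ 2 < goldenOmega :=
    pow_lt_self_of_lt_one₀ goldenOmega_pos goldenOmega_lt_one one_lt_two
  have hsplit : (Nat.fib (k + 2) + 1) * goldenOmega =
      Nat.fib (k + 1) + (goldenOmega - goldenOmega ^ 2 * (-goldenOmega) ^ k) := by
    linear_combination fib_succ_mul_goldenOmega (k + 1)
  obtain ⟨hlow, hhigh⟩ := neg_goldenOmega_pow_mem_Ioc k
  rw [hsplit, Int.floor_natCast_add, add_eq_left, Int.floor_eq_zero_iff]
  constructor <;> nlinarith

end GoldenOmega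

section Coding

lemma vTheta_eq_decide (θ : ℝ) (n : ℤ) : vTheta θ n =
    decide (⌊(n + 1) * goldenOmega + θ⌋ = ⌊n * goldenOmega + θ⌋ + 1) := by
  have hshift : (n + 1) * goldenOmega + θ = n * goldenOmega + θ + goldenOmega := by ring
  rw [hshift, Bool.eq_iff_iff, decide_eq_true_iff,
    floor_add_eq_floor_add_one_iff goldenOmega_lt_one.le]
  simp [vTheta]

lemma floor_add_one_mul_goldenOmega_add (θ : ℝ) (n : ℤ) :
    ⌊(n + 1) * goldenOmega + θ⌋ = ⌊n * goldenOmega + θ⌋ + (vTheta θ n).toNat := by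
  have hlow : ⌊n * goldenOmega + θ⌋ ≤ ⌊(n + 1) * goldenOmega + θ⌋ :=
    Int.floor_le_floor (by linarith [goldenOmega_pos])
  have hhigh : ⌊(n + 1) * goldenOmega + θ⌋ ≤ ⌊n * goldenOmega + θ⌋ + 1 := by
    rw [← Int.floor_add_one]
    exact Int.floor_le_floor (by linarith [goldenOmega_lt_one])
  rw [vTheta_eq_decide]
  by_cases h : ⌊(n + 1) * goldenOmega + θ⌋ = ⌊n * goldenOmega + θ⌋ + 1
  · simp [h]
  · simp only [h, decide_false, Bool.toNat_false, Nat.cast_zero, add_zero]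
    omega

lemma vTheta_add (θ : ℝ) (m n : ℤ) : vTheta θ (m + n) = vTheta (m * goldenOmega + θ) n := by
  rw [vTheta, vTheta, show ((m + n : ℤ) : ℝ) * goldenOmega + θ =
    n * goldenOmega + (m * goldenOmega + θ) by push_cast; ring]

/-- The word `v_θ(1) v_θ(2) ⋯ v_θ(n)`. -/
noncomputable def vWord (θ : ℝ) (n : ℕ) : List Bool :=
  (List.range n).map fun i : ℕ => vTheta θ (i + 1)

lemma vWord_succ (θ : ℝ) (n : ℕ) : vWord θ (n + 1) = vWord θ n ++ [vTheta θ (n + 1)] := by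
  simp [vWord, List.range_succ]

lemma tTheta_eq_vWord (θ : ℝ) (k : ℕ) :
    tTheta θ k = vWord (θ - Nat.fib (k + 2) * goldenOmega) (Nat.fib (k + 2)) := by
  -- In `tTheta` the variable `i` ranges over the image of `List.range` in `ℤ`, written monadically.
  simp only [tTheta, List.bind_eq_flatMap, List.pure_def, ← List.map_eq_flatMap, List.map_map]
  refine List.map_congr_left fun i _ => ?_
  rw [Function.comp_apply, add_assoc, add_comm 1, vTheta_add]
  congr 1
  push_cast
  ring

lemma exists_vWord_eq_christoffelWord {θ : ℝ} {p : ℤ} {q : ℕ} (hpq : IsCoprime p q) (hq : 0 < q)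
    (happrox : q * |q * goldenOmega - p| < 1)
    (hθ : ⌊q * goldenOmega + (θ + goldenOmega)⌋ = ⌊θ + goldenOmega⌋ + p) :
    ∃ c, vWord θ q = christoffelWord p q c := by
  obtain ⟨c, hc⟩ := exists_forall_le_floor_eq_ediv hpq hq happrox hθ
  refine ⟨c, List.map_congr_left fun i hi => ?_⟩
  have hi' := List.mem_range.1 hi
  have hfloor := hc i hi'.le
  have hfloor_succ := hc (i + 1) hi'
  push_cast at hfloor_succ
  rw [vTheta_eq_decide, ← hfloor, ← hfloor_succ]
  push_cast
  ring_nf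

lemma vWord_isRotated {θ θ' : ℝ} {p : ℤ} {q : ℕ} (hpq : IsCoprime p q) (hq : 0 < q)
    (happrox : q * |q * goldenOmega - p| < 1)
    (hθ : ⌊q * goldenOmega + (θ + goldenOmega)⌋ = ⌊θ + goldenOmega⌋ + p)
    (hθ' : ⌊q * goldenOmega + (θ' + goldenOmega)⌋ = ⌊θ' + goldenOmega⌋ + p) :
    vWord θ q ~r vWord θ' q := by
  obtain ⟨c, hc⟩ := exists_vWord_eq_christoffelWord hpq hq happrox hθ
  obtain ⟨c', hc'⟩ := exists_vWord_eq_christoffelWord hpq hq happrox hθ'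
  exact hc ▸ hc' ▸ christoffelWord_isRotated hpq hq c c'

end Coding

section FibonacciWord

lemma add_floor_mul_mul_goldenOmega (x : ℝ) :
    (x + ⌊x * goldenOmega⌋) * goldenOmega = x - goldenOmega * Int.fract (x * goldenOmega) := by
  rw [Int.fract]
  linear_combination x * goldenOmega_sq

lemma fract_intCast_mul_goldenOmega_pos {n : ℤ} (hn : n ≠ 0) :
    0 < Int.fract (n * goldenOmega) :=
  Int.fract_pos.2 ((irrational_goldenOmega.intCast_mul hn).ne_int _)

lemma vTheta_zero_add_floor {n : ℤ} (hn : n ≠ 0) :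
    vTheta 0 (n + ⌊n * goldenOmega⌋) = true := by
  have hω := goldenOmega_pos
  have hpos := fract_intCast_mul_goldenOmega_pos hn
  have hlt := Int.fract_lt_one (n * goldenOmega)
  have hfract : Int.fract ((n + ⌊n * goldenOmega⌋ : ℤ) * goldenOmega + 0) =
      1 - goldenOmega * Int.fract (n * goldenOmega) := by
    push_cast
    rw [add_zero, add_floor_mul_mul_goldenOmega, Int.fract_eq_iff]
    exact ⟨by nlinarith [goldenOmega_lt_one], by nlinarith, n - 1, by push_cast; ring⟩
  rw [vTheta, hfract, if_pos]
  constructor <;> nlinarith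

lemma vTheta_zero_add_floor_add_one {n : ℤ} (hn : n + 1 ≠ 0) (h : vTheta 0 n = true) :
    vTheta 0 (n + ⌊n * goldenOmega⌋ + 1) = false := by
  have hω := goldenOmega_pos
  have hω_sq := goldenOmega_sq
  have hlt_one := Int.fract_lt_one (n * goldenOmega)
  have hgt : 1 - goldenOmega < Int.fract (n * goldenOmega) := by
    have hge : 1 - goldenOmega ≤ Int.fract (n * goldenOmega) := by
      simp only [vTheta, add_zero, ite_eq_left_iff, Bool.false_eq_true, imp_false, not_not] at h
      exact h.1
    refine hge.lt_of_ne fun heq => (irrational_goldenOmega.intCast_mul hn).ne_int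
      (⌊n * goldenOmega⌋ + 1) ?_
    rw [Int.fract] at heq
    push_cast
    linear_combination -heq
  have hfract : Int.fract ((n + ⌊n * goldenOmega⌋ + 1 : ℤ) * goldenOmega + 0) =
      goldenOmega * (1 - Int.fract (n * goldenOmega)) := by
    push_cast
    rw [add_zero, add_one_mul, add_floor_mul_mul_goldenOmega, Int.fract_eq_iff]
    exact ⟨by nlinarith, by nlinarith, n, by ring⟩
  rw [vTheta, hfract, if_neg]
  rintro ⟨hge, -⟩
  nlinarith

lemma vWord_zero_append_fibS {n l : ℕ} (hl : ⌊(n + 1) * goldenOmega⌋ = l) :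
    vWord 0 (n + l) ++ fibS (vTheta 0 (n + 1)) =
      vWord 0 (n + 1 + (l + (vTheta 0 (n + 1)).toNat)) := by
  have hfirst : vTheta 0 ((n + l : ℕ) + 1) = true := by
    have := vTheta_zero_add_floor (n := n + 1) (by omega)
    push_cast at this ⊢
    rwa [hl, add_right_comm] at this
  cases hletter : vTheta 0 (n + 1) with
  | false => rw [Bool.toNat_false, add_zero, add_right_comm, vWord_succ, hfirst, fibS]
  | true =>
    have hsecond : vTheta 0 ((n + l + 1 : ℕ) + 1) = false := by
      have := vTheta_zero_add_floor_add_one (by omega) hletter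
      push_cast at this ⊢
      rwa [hl, add_right_comm (n : ℤ)] at this
    rw [Bool.toNat_true, show n + 1 + (l + 1) = n + l + 1 + 1 by ring, vWord_succ, vWord_succ,
      hfirst, hsecond, fibS, List.append_assoc, List.singleton_append]

lemma flatMap_fibS_vWord_zero {n m : ℕ} (hm : ⌊(n + 1) * goldenOmega⌋ = m) :
    (vWord 0 n).flatMap fibS = vWord 0 (n + m) := by
  induction n generalizing m with
  | zero =>
    obtain rfl : m = 0 := by simpa [floor_goldenOmega] using hm.symm
    rfl
  | succ n ih =>
    obtain ⟨l, hl⟩ : ∃ l : ℕ, ⌊(n + 1) * goldenOmega⌋ = l :=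
      Int.eq_ofNat_of_zero_le
        (Int.floor_nonneg.2 (mul_nonneg n.cast_add_one_pos.le goldenOmega_pos.le))
    have hm_eq : m = l + (vTheta 0 (n + 1)).toNat := by
      have hfloor := floor_add_one_mul_goldenOmega_add 0 (n + 1)
      push_cast at hfloor hm
      rw [add_zero, add_zero, hm, hl] at hfloor
      exact_mod_cast hfloor
    rw [vWord_succ, List.flatMap_append, ih hl, List.flatMap_singleton, vWord_zero_append_fibS hl,
      ← hm_eq]

lemma fibWord_eq_vWord_zero (k : ℕ) : fibWord k = vWord 0 (Nat.fib (k + 2)) := by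
  induction k with
  | zero =>
    have hletter : vTheta 0 1 = true := by
      simpa [floor_goldenOmega] using vTheta_zero_add_floor one_ne_zero
    simp [fibWord, vWord, hletter]
  | succ k ih =>
    rw [fibWord, ih, flatMap_fibS_vWord_zero (floor_fib_add_one_mul_goldenOmega k),
      add_comm (Nat.fib (k + 2)), ← Nat.fib_add_two]

lemma length_fibWord (k : ℕ) : (fibWord k).length = Nat.fib (k + 2) := by
  simp [fibWord_eq_vWord_zero, vWord]

end FibonacciWord

lemma fibWord_isRotated_tTheta {θ : ℝ} {k : ℕ}
    (h : ⌊θ + goldenOmega + (-goldenOmega) ^ (k + 2)⌋ = ⌊θ + goldenOmega⌋) :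
    fibWord k ~r tTheta θ k := by
  rw [fibWord_eq_vWord_zero, tTheta_eq_vWord]
  refine vWord_isRotated (p := Nat.fib (k + 1))
    (Nat.isCoprime_iff_coprime.2 (Nat.fib_coprime_fib_succ (k + 1)))
    (Nat.fib_pos.2 (by omega))
    (mod_cast fib_succ_mul_abs_sub_lt_one (k + 1)) ?_ ?_
  · rw [zero_add, ← add_one_mul, floor_fib_add_one_mul_goldenOmega, floor_goldenOmega, zero_add]
  · have hphase : θ - Nat.fib (k + 2) * goldenOmega + goldenOmega =
        θ + goldenOmega + (-goldenOmega) ^ (k + 2) - Nat.fib (k + 1) := by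
      linear_combination -fib_succ_mul_goldenOmega (k + 1)
    have hend : Nat.fib (k + 2) * goldenOmega + (θ - Nat.fib (k + 2) * goldenOmega + goldenOmega) =
        θ + goldenOmega := by ring
    rw [hend, hphase, Int.floor_sub_natCast, sub_add_cancel, h]

lemma exists_tTheta_eq_rotate {θ : ℝ} {k : ℕ}
    (h : ⌊θ + goldenOmega + (-goldenOmega) ^ (k + 2)⌋ = ⌊θ + goldenOmega⌋) :
    ∃ i < Nat.fib (k + 2), tTheta θ k = (fibWord k).rotate i := by
  obtain ⟨n, hn⟩ := fibWord_isRotated_tTheta h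
  refine ⟨n % Nat.fib (k + 2), Nat.mod_lt _ (Nat.fib_pos.2 (by omega)), ?_⟩
  rw [← length_fibWord, List.rotate_mod, hn]

/-- For every `θ ∈ ℝ`, either for all odd `k ≥ 1` the word `t_k^θ` is a cyclic rotation of
`s_k`, or for all even `k ≥ 0` the word `t_k^θ` is a cyclic rotation of `s_k`.
(Here `u.rotate i = u_{i+1} ... u_n u_1 ... u_i` and `F_k = Nat.fib (k + 2)`.) -/
theorem tTheta_cyclic_rotation (θ : ℝ) :
    (∀ k, Odd k → ∃ i < Nat.fib (k + 2), tTheta θ k = (fibWord k).rotate i) ∨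
    (∀ k, Even k → ∃ i < Nat.fib (k + 2), tTheta θ k = (fibWord k).rotate i) := by
  have hω := goldenOmega_pos
  have hω_cube : goldenOmega ^ 2 + goldenOmega ^ 3 = goldenOmega := by
    linear_combination goldenOmega * goldenOmega_sq
  have hfract_nonneg := Int.fract_nonneg (θ + goldenOmega)
  have hfract_lt_one := Int.fract_lt_one (θ + goldenOmega)
  rcases le_or_gt (goldenOmega ^ 3) (Int.fract (θ + goldenOmega)) with hge | hlt
  · refine Or.inl fun k hk => exists_tTheta_eq_rotate ?_
    have hpow_le := goldenOmega_pow_le_pow (show 3 ≤ k + 2 by have := hk.pos; omega)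
    have hpow_pos := pow_pos hω (k + 2)
    rw [(hk.add_even even_two).neg_pow, floor_add_eq_floor_iff]
    constructor <;> linarith
  · refine Or.inr fun k hk => exists_tTheta_eq_rotate ?_
    have hpow_le := goldenOmega_pow_le_pow (show 2 ≤ k + 2 by omega)
    have hpow_pos := pow_pos hω (k + 2)
    rw [(hk.add even_two).neg_pow, floor_add_eq_floor_iff]
    constructor <;> linarith [goldenOmega_lt_one]
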